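/- arXiv:2508.05828 — 8 statements merged into one kernel-verified Lean document; each statement's English description precedes it below -/
import Mathlib

section
/- For every nonempty type α, the free semigroup FreeSemigroup α is not a retract of its ultrapower over the hyperfilter on ℕ: there is no multiplication-preserving map r : Filter.Germ (Filter.hyperfilter ℕ) (FreeSemigroup α) → FreeSemigroup α (i.e., r (x * y) = r x * r y for all germs x, y) satisfying r (↑w) = w for every w : FreeSemigroup α, where ↑w denotes the constant germ. -/
/-!
Divisibility passes to germs: if `a` divides almost every term of a sequence `f`, then the constant
germ `↑a` divides the germ of `f`. A retraction preserves divisibility and fixes constants, so it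
sends the germ of the sequence of words `a, aa, aaa, …` to a word divisible by each of them. This is
impossible, since a divisor of a word is shorter than the word.
-/

open Filter

section Germ

variable {ι S : Type*} [Semigroup S] {l : Filter ι}

theorem germ_coe_dvd_coe {f g : ι → S} :
    (f : Germ l S) ∣ (g : Germ l S) ↔ ∀ᶠ i in l, f i ∣ g i := by
  constructor
  · rintro ⟨c, hc⟩
    induction c using Germ.inductionOn with
    | _ c => exact (Germ.coe_eq.mp hc).mono fun i hi ↦ ⟨c i, hi⟩
  · intro h
    have hquot (i : ι) : ∃ c, f i ∣ g i → g i = f i * c := by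
      by_cases hi : f i ∣ g i
      · exact hi.imp fun c hc _ ↦ hc
      · exact ⟨f i, fun hi' ↦ absurd hi' hi⟩
    choose c hc using hquot
    exact ⟨(c : Germ l S), Germ.coe_eq.mpr (h.mono hc)⟩

theorem dvd_germRetraction_coe {r : Germ l S →ₙ* S} (hr : ∀ s : S, r ↑s = s) {a : S} {f : ι → S}
    (h : ∀ᶠ i in l, a ∣ f i) : a ∣ r f := by
  have hdvd : (↑a : Germ l S) ∣ f := germ_coe_dvd_coe.mpr h
  simpa only [hr] using map_dvd r hdvd

theorem stmt_1_general {f : ι → S} (hdvd : ∀ i, ∀ᶠ j in l, f i ∣ f j)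
    (hunbounded : ∀ s, ∃ i, ¬ f i ∣ s) :
    ¬ ∃ r : Germ l S → S, (∀ x y, r (x * y) = r x * r y) ∧ ∀ s : S, r ↑s = s := by
  rintro ⟨r, hmul, hr⟩
  obtain ⟨i, hi⟩ := hunbounded (r f)
  exact hi (dvd_germRetraction_coe (r := ⟨r, hmul⟩) hr (hdvd i))

end Germ

section FreeSemigroup

variable {α : Type*}

theorem length_lt_of_dvd {x y : FreeSemigroup α} (h : x ∣ y) :
    x.length < y.length := by
  obtain ⟨z, rfl⟩ := h
  rw [FreeSemigroup.length_mul]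
  exact Nat.lt_add_of_pos_right z.tail.length.succ_pos

theorem mk_replicate_dvd (a : α) {m n : ℕ} (h : m < n) :
    FreeSemigroup.mk a (List.replicate m a) ∣ FreeSemigroup.mk a (List.replicate n a) := by
  obtain ⟨k, rfl⟩ := Nat.exists_eq_add_of_lt h
  refine ⟨⟨a, List.replicate k a⟩, ?_⟩
  rw [FreeSemigroup.mk_mul_mk, ← List.replicate_succ, ← List.replicate_add, add_assoc]

theorem eventually_mk_replicate_dvd (a : α) (m : ℕ) :
    ∀ᶠ n in atTop,
      FreeSemigroup.mk a (List.replicate m a) ∣ FreeSemigroup.mk a (List.replicate n a) :=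
  (eventually_gt_atTop m).mono fun _ ↦ mk_replicate_dvd a

theorem not_mk_replicate_length_dvd (a : α) (x : FreeSemigroup α) :
    ¬ FreeSemigroup.mk a (List.replicate x.length a) ∣ x := by
  intro h
  have hlt := length_lt_of_dvd h
  rw [FreeSemigroup.length, List.length_replicate] at hlt
  omega

end FreeSemigroup

/-- No free semigroup on a nonempty type is a retract of its ultrapower (enlargement)
over the hyperfilter on ℕ. -/
theorem stmt_1 (α : Type*) [Nonempty α] :
    ¬ ∃ r : Filter.Germ (Filter.hyperfilter ℕ : Filter ℕ) (FreeSemigroup α) → FreeSemigroup α,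
        (∀ x y, r (x * y) = r x * r y) ∧ (∀ w : FreeSemigroup α, r ↑w = w) := by
  obtain ⟨a⟩ := ‹Nonempty α›
  exact stmt_1_general (f := fun n ↦ ⟨a, List.replicate n a⟩)
    (fun m ↦ (eventually_mk_replicate_dvd a m).filter_mono Nat.hyperfilter_le_atTop)
    (fun x ↦ ⟨x.length, not_mk_replicate_length_dvd a x⟩)
end

section
/- There exists a hypernatural N : Filter.Germ (Filter.hyperfilter ℕ) ℕ such that N is not equal to the constant germ ↑m for any m : ℕ, and for every natural number n with 0 < n, the constant germ ↑n divides N in the multiplicative monoid Filter.Germ (Filter.hyperfilter ℕ) ℕ. -/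
open Filter
open scoped Nat

theorem germ_dvd_germ_iff {ι M : Type*} [Semigroup M] {l : Filter ι} {f g : ι → M} :
    (f : Germ l M) ∣ g ↔ ∀ᶠ i in l, f i ∣ g i := by
  constructor
  · rintro ⟨q, hq⟩
    induction q using Germ.inductionOn with
    | _ q => exact (Germ.coe_eq.1 hq).mono fun i hi ↦ ⟨q i, hi⟩
  · intro h
    obtain ⟨q, hq⟩ := (@skolem ι (fun _ ↦ M) (fun i ↦ ⟨f i⟩) _ l).1 h
    exact ⟨q, Germ.coe_eq.2 hq⟩

theorem germ_ne_const_of_tendsto_cofinite {ι α : Type*} {l : Filter ι} [l.NeBot] {f : ι → α}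
    (hf : Tendsto f l cofinite) (a : α) : (f : Germ l α) ≠ ↑a := by
  intro h
  obtain ⟨i, hne, heq⟩ :=
    ((hf.eventually (eventually_cofinite_ne a)).and (Germ.coe_eq.1 h)).exists
  exact hne heq

theorem eventually_dvd_factorial {n : ℕ} (hn : 0 < n) : ∀ᶠ k in atTop, n ∣ k ! :=
  (eventually_ge_atTop n).mono fun _ hk ↦ Nat.dvd_factorial hn hk

theorem stmt_2_general {ι : Type*} {l : Filter ι} [l.NeBot] {f : ι → ℕ}
    (hf : Tendsto f l atTop) :
    ∃ N : Germ l ℕ, (∀ m : ℕ, N ≠ ↑m) ∧ (∀ n : ℕ, 0 < n → (↑n : Germ l ℕ) ∣ N) := by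
  have hfactorial : Tendsto (fun i ↦ (f i)!) l cofinite :=
    Nat.cofinite_eq_atTop ▸ factorial_tendsto_atTop.comp hf
  exact ⟨↑fun i ↦ (f i)!, germ_ne_const_of_tendsto_cofinite hfactorial,
    fun _ hn ↦ germ_dvd_germ_iff.2 (hf.eventually (eventually_dvd_factorial hn))⟩

/-- Overspill example: there is a nonstandard hypernatural divisible by every positive
standard natural number. -/
theorem stmt_2 :
    ∃ N : Filter.Germ (Filter.hyperfilter ℕ : Filter ℕ) ℕ,
      (∀ m : ℕ, N ≠ ↑m) ∧ (∀ n : ℕ, 0 < n → (↑n : Filter.Germ (Filter.hyperfilter ℕ : Filter ℕ) ℕ) ∣ N) :=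
  stmt_2_general Nat.hyperfilter_le_atTop
end

section
/- There exists a hypernatural ψ : Filter.Germ (Filter.hyperfilter ℕ) ℕ such that ψ is not equal to the constant germ ↑m for any m : ℕ, and ψ is a prime element (in the sense of the predicate Prime) of the commutative monoid with zero Filter.Germ (Filter.hyperfilter ℕ) ℕ. -/
/-!
Being prime is a first-order property, so, as in Łoś's theorem, a germ along an ultrafilter is
prime exactly when its representatives are prime almost everywhere. An injective sequence of primes
tends to infinity along a nonprincipal ultrafilter, so its germ is a prime that is not constant.
-/

open Filter

section Germs

variable {ι M : Type*} {l : Filter ι} {f g : ι → M}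

theorem eventually_forall_iff_forall_eventually {β : ι → Type*} [∀ i, Nonempty (β i)]
    {P : ∀ i, β i → Prop} :
    (∀ᶠ i in l, ∀ b, P i b) ↔ ∀ b : ∀ i, β i, ∀ᶠ i in l, P i (b i) := by
  refine ⟨fun h b ↦ h.mono fun i hi ↦ hi (b i), fun h ↦ ?_⟩
  have drinker (i : ι) : ∃ b, P i b → ∀ c, P i c := by
    by_contra! hP
    obtain ⟨-, c, hc⟩ := hP (Classical.arbitrary (β i))
    exact hc (hP c).1
  choose b hb using drinker
  exact (h b).mono hb

theorem germ_coe_dvd_coe_iff [Semigroup M] :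
    (f : Germ l M) ∣ (g : Germ l M) ↔ ∀ᶠ i in l, f i ∣ g i := by
  constructor
  · rintro ⟨⟨c⟩, hc⟩
    exact (Germ.coe_eq.1 hc).mono fun i hi ↦ ⟨c i, hi⟩
  · intro h
    obtain ⟨c, hc⟩ := (@skolem ι (fun _ ↦ M) (fun i ↦ ⟨g i⟩) _ l).1 h
    exact ⟨(c : Germ l M), Germ.coe_eq.2 hc⟩

theorem germ_isUnit_coe_iff [CommMonoid M] :
    IsUnit (f : Germ l M) ↔ ∀ᶠ i in l, IsUnit (f i) := by
  simp only [isUnit_iff_dvd_one, ← Germ.coe_one, germ_coe_dvd_coe_iff, Pi.one_apply]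

theorem germ_coe_ne_const_of_tendsto_cofinite [NeBot l] (hf : Tendsto f l cofinite) (m : M) :
    (f : Germ l M) ≠ ↑m := by
  intro h
  obtain ⟨i, hne, heq⟩ := ((hf.eventually (eventually_cofinite_ne m)).and (Germ.coe_eq.1 h)).exists
  exact hne heq

end Germs

section Ultrapowers

variable {ι M : Type*} [CommSemiring M] {φ : Ultrafilter ι}

theorem germ_prime_coe_iff {f : ι → M} :
    Prime (f : Germ (φ : Filter ι) M) ↔ ∀ᶠ i in φ, Prime (f i) := by
  have ne_zero_iff : (f : Germ (φ : Filter ι) M) ≠ 0 ↔ ∀ᶠ i in φ, f i ≠ 0 :=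
    Germ.coe_eq.not.trans Ultrafilter.eventually_not.symm
  have not_isUnit_iff : ¬IsUnit (f : Germ (φ : Filter ι) M) ↔ ∀ᶠ i in φ, ¬IsUnit (f i) :=
    germ_isUnit_coe_iff.not.trans Ultrafilter.eventually_not.symm
  have dvd_or_dvd_iff (a b : ι → M) :
      ((f : Germ (φ : Filter ι) M) ∣ a * b → (f : Germ (φ : Filter ι) M) ∣ a ∨
        (f : Germ (φ : Filter ι) M) ∣ b) ↔
      ∀ᶠ i in φ, f i ∣ a i * b i → f i ∣ a i ∨ f i ∣ b i := by
    rw [← Germ.coe_mul, Ultrafilter.eventually_imp, Ultrafilter.eventually_or]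
    simp only [germ_coe_dvd_coe_iff, Pi.mul_apply]
  have forall_germ_iff : (∀ a b : Germ (φ : Filter ι) M, ↑f ∣ a * b → ↑f ∣ a ∨ ↑f ∣ b) ↔
      ∀ᶠ i in φ, ∀ a b, f i ∣ a * b → f i ∣ a ∨ f i ∣ b := by
    simp only [eventually_forall_iff_forall_eventually, ← dvd_or_dvd_iff]
    exact ⟨fun h a b ↦ h a b, fun h a b ↦ Germ.inductionOn₂ a b h⟩
  simp only [Prime, eventually_and, ne_zero_iff, not_isUnit_iff, forall_germ_iff]

theorem stmt_3_general [Countable ι] (hφ : (φ : Filter ι) ≤ cofinite)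
    (hM : {q : M | Prime q}.Infinite) :
    ∃ ψ : Germ (φ : Filter ι) M, (∀ m : M, ψ ≠ ↑m) ∧ Prime ψ := by
  obtain ⟨e, he⟩ := exists_injective_nat ι
  let p (i : ι) : {q : M | Prime q} := hM.natEmbedding _ (e i)
  have p_injective : Function.Injective fun i ↦ (p i : M) :=
    Subtype.val_injective.comp ((hM.natEmbedding _).injective.comp he)
  have p_tendsto : Tendsto (fun i ↦ (p i : M)) φ cofinite :=
    p_injective.tendsto_cofinite.mono_left hφ
  exact ⟨((fun i ↦ (p i : M) : ι → M) : Germ (φ : Filter ι) M),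
    germ_coe_ne_const_of_tendsto_cofinite p_tendsto,
    germ_prime_coe_iff.2 (.of_forall fun i ↦ (p i).2)⟩

end Ultrapowers

/-- There exists an infinite (nonstandard) prime hypernatural in the ultrapower of ℕ
over the hyperfilter. -/
theorem stmt_3 :
    ∃ ψ : Filter.Germ (Filter.hyperfilter ℕ : Filter ℕ) ℕ,
      (∀ m : ℕ, ψ ≠ ↑m) ∧ Prime ψ :=
  stmt_3_general hyperfilter_le_cofinite <| by
    simpa only [Nat.prime_iff] using Nat.infinite_setOfPred_prime
end

section
/- There is no map r : Filter.Germ (Filter.hyperfilter ℕ) ℕ → ℕ satisfying all of: r (Filter.Germ.map₂ max x y) = max (r x) (r y) and r (Filter.Germ.map₂ min x y) = min (r x) (r y) for all germs x, y, together with r (↑n) = n for every n : ℕ. That is, the lattice of natural numbers under the usual order is not a retract of its ultrapower over the hyperfilter. -/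
/-!
The germ `ω` of the identity on `ℕ` lies above every constant germ. A retraction `r` that preserves
joins is monotone, so `n = r ↑n ≤ r ω` for every `n`, and `r ω` would be a greatest natural number.
-/

open Filter Set

theorem isTop_of_leftInverse_of_mem_upperBounds_range {α β : Type*} [Preorder α] [Preorder β]
    {r : β → α} {g : α → β} {b : β} (hr : Monotone r) (hrg : Function.LeftInverse r g)
    (hb : b ∈ upperBounds (range g)) : IsTop (r b) := fun a ↦
  calc
    a = r (g a) := (hrg a).symm
    _ ≤ r b := hr (hb (mem_range_self a))

theorem germ_mem_upperBounds_range_const_iff {ι α : Type*} [Preorder α] {l : Filter ι}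
    {f : ι → α} :
    (f : Germ l α) ∈ upperBounds (range fun a : α ↦ (a : Germ l α)) ↔ Tendsto f l atTop :=
  forall_mem_range.trans tendsto_atTop.symm

theorem stmt_4_general {ι α : Type*} [Preorder α] [NoTopOrder α] {l : Filter ι} {f : ι → α}
    (hf : Tendsto f l atTop) :
    ¬ ∃ r : Germ l α → α, Monotone r ∧ ∀ a : α, r ↑a = a := by
  rintro ⟨r, hmono, hconst⟩
  have hbound := germ_mem_upperBounds_range_const_iff.2 hf
  exact not_isTop _ (isTop_of_leftInverse_of_mem_upperBounds_range hmono hconst hbound)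

/-- The lattice of natural numbers under the usual ordering is not a retract of its
ultrapower over the hyperfilter. -/
theorem stmt_4 :
    ¬ ∃ r : Filter.Germ (Filter.hyperfilter ℕ : Filter ℕ) ℕ → ℕ,
        (∀ x y, r (Filter.Germ.map₂ max x y) = max (r x) (r y)) ∧
        (∀ x y, r (Filter.Germ.map₂ min x y) = min (r x) (r y)) ∧
        (∀ n : ℕ, r ↑n = n) := by
  rintro ⟨r, hmax, -, hconst⟩
  exact stmt_4_general (tendsto_id'.2 Nat.hyperfilter_le_atTop) ⟨r, .of_map_sup hmax, hconst⟩
end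

section
/- There is no map r : Filter.Germ (Filter.hyperfilter ℕ) ℕ → ℕ satisfying all of: r (Filter.Germ.map₂ Nat.gcd x y) = Nat.gcd (r x) (r y) and r (Filter.Germ.map₂ Nat.lcm x y) = Nat.lcm (r x) (r y) for all germs x, y, together with r (↑n) = n for every n : ℕ. That is, the lattice of natural numbers under the divisibility ordering (with meet gcd and join lcm) is not a retract of its ultrapower over the hyperfilter. -/
/-!
The argument uses meets only. If `g` tends to infinity, the germ of `2 ^ g` is divisible by every
power of `2` and coprime to `3`. Both properties are expressed by a gcd with a constant, so a
retraction would send this germ to a natural number having them too; but divisibility by every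
power of `2` forces that number to be `0`, which is not coprime to `3`.
-/

open Filter

section Retraction

variable {ι α : Type*} {l : Filter ι}

theorem op_retraction_eq_of_eventually {op : α → α → α} {r : Germ l α → α}
    (map_op : ∀ x y, r (Germ.map₂ op x y) = op (r x) (r y)) (fixes_const : ∀ a : α, r ↑a = a)
    {f : ι → α} {a b : α} (h : ∀ᶠ i in l, op (f i) a = b) : op (r ↑f) a = b :=
  calc
    op (r ↑f) a = op (r ↑f) (r ↑a) := by rw [fixes_const]
    _ = r (Germ.map₂ op ↑f ↑a) := (map_op _ _).symm
    _ = r ↑b := congrArg r (Germ.coe_eq.2 h)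
    _ = b := fixes_const b

variable {r : Germ l ℕ → ℕ} (map_gcd : ∀ x y, r (Germ.map₂ Nat.gcd x y) = Nat.gcd (r x) (r y))
  (fixes_const : ∀ n : ℕ, r ↑n = n) {f : ι → ℕ} {d : ℕ}

include map_gcd fixes_const

theorem dvd_retraction_of_eventually_dvd (h : ∀ᶠ i in l, d ∣ f i) : d ∣ r ↑f :=
  Nat.gcd_eq_right_iff_dvd.1 <|
    op_retraction_eq_of_eventually map_gcd fixes_const (h.mono fun _ => Nat.gcd_eq_right)

theorem coprime_retraction_of_eventually_coprime (h : ∀ᶠ i in l, Nat.Coprime (f i) d) :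
    Nat.Coprime (r ↑f) d :=
  op_retraction_eq_of_eventually map_gcd fixes_const h

end Retraction

theorem eq_zero_of_forall_pow_dvd {p n : ℕ} (hp : 1 < p) (h : ∀ k, p ^ k ∣ n) : n = 0 :=
  Nat.eq_zero_of_dvd_of_lt (h n) (Nat.lt_pow_self hp)

theorem stmt_5_general {ι : Type*} {l : Filter ι} {g : ι → ℕ} (hg : Tendsto g l atTop) :
    ¬ ∃ r : Germ l ℕ → ℕ,
        (∀ x y, r (Germ.map₂ Nat.gcd x y) = Nat.gcd (r x) (r y)) ∧ (∀ n : ℕ, r ↑n = n) := by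
  rintro ⟨r, map_gcd, fixes_const⟩
  let f : ι → ℕ := fun i => 2 ^ g i
  have two_pow_dvd (k : ℕ) : 2 ^ k ∣ r ↑f :=
    dvd_retraction_of_eventually_dvd map_gcd fixes_const <|
      (hg.eventually_ge_atTop k).mono fun _ => pow_dvd_pow 2
  have coprime_three : Nat.Coprime (r ↑f) 3 :=
    coprime_retraction_of_eventually_coprime map_gcd fixes_const <|
      .of_forall fun i => Nat.Coprime.pow_left (g i) (by decide)
  rw [eq_zero_of_forall_pow_dvd one_lt_two two_pow_dvd] at coprime_three
  exact absurd coprime_three (by decide)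

/-- The lattice of natural numbers under the divisibility ordering (meet `gcd`, join `lcm`)
is not a retract of its ultrapower over the hyperfilter. -/
theorem stmt_5 :
    ¬ ∃ r : Filter.Germ (Filter.hyperfilter ℕ : Filter ℕ) ℕ → ℕ,
        (∀ x y, r (Filter.Germ.map₂ Nat.gcd x y) = Nat.gcd (r x) (r y)) ∧
        (∀ x y, r (Filter.Germ.map₂ Nat.lcm x y) = Nat.lcm (r x) (r y)) ∧
        (∀ n : ℕ, r ↑n = n) :=
  fun ⟨r, map_gcd, _, fixes_const⟩ =>
    stmt_5_general (tendsto_id.mono_left Nat.hyperfilter_le_atTop) ⟨r, map_gcd, fixes_const⟩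
end

section
/- There is no ring homomorphism r : Filter.Germ (Filter.hyperfilter ℕ) ℤ →+* ℤ with r (↑k) = k for every k : ℤ. That is, the ring of integers is not a retract of its ultrapower *ℤ over the hyperfilter (which, since ℤ is finitely generated as a ring, equals its extension monad). -/
/-!
By Lagrange's theorem non-negative integers are sums of four squares. Since the number of squares
is bounded, this passes to germs: the non-negative elements of `*ℤ` are sums of squares, so every
ring homomorphism from `*ℤ` to a linearly ordered ring is monotone. It would send an infinite
element of `*ℤ` to an element above every natural number, and an Archimedean ring has none.
-/

open Filter

theorem isSumSq_map {A R : Type*} [NonAssocSemiring A] [NonAssocSemiring R] (φ : A →+* R) {a : A}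
    (ha : IsSumSq a) : IsSumSq (φ a) := by
  induction ha with
  | zero =>
    rw [map_zero]
    exact .zero
  | sq_add a _ ih =>
    rw [map_add, map_mul]
    exact .sq_add (φ a) ih

theorem monotone_ringHom_of_nonneg_isSumSq {A R : Type*} [NonAssocRing A] [PartialOrder A]
    [IsOrderedAddMonoid A] [Ring R] [LinearOrder R] [IsStrictOrderedRing R]
    (hA : ∀ a : A, 0 ≤ a → IsSumSq a) (φ : A →+* R) : Monotone φ :=
  (monotone_iff_map_nonneg φ).2 fun a ha ↦ (isSumSq_map φ (hA a ha)).nonneg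

theorem not_monotone_ringHom_of_forall_natCast_le {A R : Type*} [NonAssocSemiring A] [Preorder A]
    [Semiring R] [PartialOrder R] [IsStrictOrderedRing R] [Archimedean R] {a : A}
    (ha : ∀ n : ℕ, (n : A) ≤ a) (φ : A →+* R) : ¬ Monotone φ := by
  intro hφ
  obtain ⟨n, hn⟩ := exists_nat_gt (φ a)
  have hle : (n : R) ≤ φ a := map_natCast φ n ▸ hφ (ha n)
  exact hn.not_ge hle

theorem germ_natCast_le_coe_of_tendsto_atTop {ι A : Type*} {l : Filter ι} [NatCast A] [Preorder A]
    {f : ι → A} (hf : Tendsto f l atTop) (n : ℕ) : (n : Germ l A) ≤ ↑f :=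
  Germ.coe_le.2 (hf.eventually_ge_atTop (n : A))

theorem germ_isSumSq_of_nonneg {ι κ A : Type*} {l : Filter ι} [Fintype κ] [CommSemiring A]
    [LE A] (hA : ∀ a : A, 0 ≤ a → ∃ x : κ → A, ∑ j, x j ^ 2 = a) (g : Germ l A) (hg : 0 ≤ g) :
    IsSumSq g := by
  induction g using Germ.inductionOn with | _ f
  choose! x hx using hA
  let s (j : κ) : ι → A := fun i ↦ x (f i) j
  have hf : f =ᶠ[l] ∑ j, s j ^ 2 := (Germ.coe_nonneg.1 hg).mono fun i hi ↦ by
    simpa only [s, Finset.sum_apply, Pi.pow_apply] using (hx (f i) hi).symm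
  rw [Germ.coe_eq.2 hf]
  exact isSumSq_map (Germ.coeRingHom l) (.sum_sq Finset.univ s)

theorem int_exists_sum_four_squares (n : ℤ) (hn : 0 ≤ n) :
    ∃ x : Fin 4 → ℤ, ∑ j, x j ^ 2 = n := by
  lift n to ℕ using hn
  obtain ⟨a, b, c, d, h⟩ := Nat.sum_four_squares n
  refine ⟨![a, b, c, d], ?_⟩
  simp only [Fin.sum_univ_four, Matrix.cons_val]
  exact mod_cast h

theorem stmt_6_general {ι κ A R : Type*} {l : Filter ι} [Fintype κ] [CommRing A] [PartialOrder A]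
    [IsOrderedAddMonoid A] [Ring R] [LinearOrder R] [IsStrictOrderedRing R] [Archimedean R]
    (hA : ∀ a : A, 0 ≤ a → ∃ x : κ → A, ∑ j, x j ^ 2 = a) {f : ι → A} (hf : Tendsto f l atTop) :
    IsEmpty (Germ l A →+* R) where
  false φ :=
    not_monotone_ringHom_of_forall_natCast_le (germ_natCast_le_coe_of_tendsto_atTop hf) φ
      (monotone_ringHom_of_nonneg_isSumSq (germ_isSumSq_of_nonneg hA) φ)

/-- The ring of integers is not a retract of its ultrapower (= extension monad) over the
hyperfilter: no ring homomorphism from *ℤ to ℤ fixes all constant germs. -/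
theorem stmt_6 :
    ¬ ∃ r : Filter.Germ (Filter.hyperfilter ℕ : Filter ℕ) ℤ →+* ℤ,
        ∀ k : ℤ, r ↑k = k :=
  fun ⟨r, _⟩ ↦ (stmt_6_general int_exists_sum_four_squares
    (tendsto_natCast_atTop_atTop.mono_left Nat.hyperfilter_le_atTop)).false r
end

section
/- There is no additive map r : Filter.Germ (Filter.hyperfilter ℕ) ℤ → ℤ (i.e., r (x + y) = r x + r y for all germs x, y) with r (↑k) = k for every k : ℤ. That is, the additive semigroup of integers is not a retract of its ultrapower *ℤ over the hyperfilter (which, since ℤ is finitely generated as an additive semigroup, equals its extension monad). -/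
/-!
For an infinite `ν` in `*ℕ`, the element `2 ^ ν` of `*ℤ` is divisible by every standard power
of `2`. Hence an additive map `*ℤ → ℤ` sends all multiples of `2 ^ ν` to integers divisible by
every power of `2`, that is, to `0`; likewise for `3 ^ ν`. Since `2 ^ ν` and `3 ^ ν` are coprime
in `*ℤ`, every element is a sum of two such multiples, so the map vanishes.
-/

open Filter

section

variable {ι R M N : Type*} {l : Filter ι} {ν : Germ l ℕ} {a b : R}

theorem isCoprime_germ_map_pow [CommSemiring R] (hab : IsCoprime a b) (ν : Germ l ℕ) :
    IsCoprime (ν.map (a ^ ·)) (ν.map (b ^ ·)) := by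
  induction ν using Germ.inductionOn with | _ d
  choose u v huv using fun i => hab.pow (m := d i) (n := d i)
  exact ⟨↑u, ↑v, congrArg _ (funext huv)⟩

theorem exists_germ_map_pow_smul_eq_pow_smul [Monoid R] [MulAction R M] (hν : ν.Tendsto atTop)
    (a : R) (k : ℕ) (x : Germ l M) : ∃ y : Germ l M, ν.map (a ^ ·) • x = a ^ k • y := by
  induction ν, x using Germ.inductionOn₂ with | _ d x
  refine ⟨↑(fun i => a ^ (d i - k) • x i), Germ.coe_eq.2 ?_⟩
  filter_upwards [(Germ.coe_tendsto.1 hν).eventually_ge_atTop k] with i hi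
  change a ^ d i • x i = a ^ k • a ^ (d i - k) • x i
  rw [smul_smul, pow_mul_pow_sub a hi]

variable [CommRing R] [AddCommGroup M] [Module R M] [AddCommGroup N] [Module R N]

theorem eq_zero_of_forall_exists_eq_pow_smul [IsHausdorff (Ideal.span {a}) N] {x : N}
    (hx : ∀ k : ℕ, ∃ y, x = a ^ k • y) : x = 0 := by
  refine IsHausdorff.haus ‹_› x fun k => SModEq.zero.2 ?_
  obtain ⟨y, rfl⟩ := hx k
  exact Submodule.smul_mem_smul (Ideal.pow_mem_pow (Ideal.mem_span_singleton_self a) k) trivial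

theorem map_germ_map_pow_smul_eq_zero [IsHausdorff (Ideal.span {a}) N] (hν : ν.Tendsto atTop)
    (f : Germ l M →ₗ[R] N) (x : Germ l M) : f (ν.map (a ^ ·) • x) = 0 := by
  refine eq_zero_of_forall_exists_eq_pow_smul (a := a) fun k => ?_
  obtain ⟨y, hy⟩ := exists_germ_map_pow_smul_eq_pow_smul hν a k x
  exact ⟨f y, by rw [hy, map_smul]⟩

theorem stmt_7_general [IsHausdorff (Ideal.span {a}) N] [IsHausdorff (Ideal.span {b}) N]
    (hab : IsCoprime a b) (hν : ν.Tendsto atTop) (f : Germ l M →ₗ[R] N) : f = 0 := by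
  ext x
  obtain ⟨u, v, huv⟩ := isCoprime_germ_map_pow hab ν
  calc
    f x = f (ν.map (a ^ ·) • u • x + ν.map (b ^ ·) • v • x) := by
      rw [smul_smul, smul_smul, ← add_smul, mul_comm _ u, mul_comm _ v, huv, one_smul]
    _ = 0 := by
      rw [map_add, map_germ_map_pow_smul_eq_zero hν, map_germ_map_pow_smul_eq_zero hν, add_zero]

theorem addMonoidHom_germ_int_eq_zero (hν : ν.Tendsto atTop) (f : Germ l M →+ ℤ) : f = 0 := by
  have h2 : IsHausdorff (Ideal.span {(2 : ℤ)}) ℤ :=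
    .of_isDomain _ (Ideal.span_singleton_eq_top.not.2 Int.prime_two.not_isUnit)
  have h3 : IsHausdorff (Ideal.span {(3 : ℤ)}) ℤ :=
    .of_isDomain _ (Ideal.span_singleton_eq_top.not.2 Int.prime_three.not_isUnit)
  have hf : f.toIntLinearMap = 0 :=
    stmt_7_general (a := (2 : ℤ)) (b := 3) (by norm_num) hν f.toIntLinearMap
  exact AddMonoidHom.ext (LinearMap.congr_fun hf)

end

/-- The additive semigroup of integers is not a retract of its ultrapower (= extension
monad) over the hyperfilter. -/
theorem stmt_7 :
    ¬ ∃ r : Filter.Germ (Filter.hyperfilter ℕ : Filter ℕ) ℤ → ℤ,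
        (∀ x y, r (x + y) = r x + r y) ∧ (∀ k : ℤ, r ↑k = k) := by
  rintro ⟨r, hadd, hr⟩
  have hr_zero : AddMonoidHom.mk' r hadd = 0 :=
    addMonoidHom_germ_int_eq_zero (Germ.coe_tendsto.2 (tendsto_id'.2 Nat.hyperfilter_le_atTop)) _
  exact one_ne_zero ((hr 1).symm.trans (DFunLike.congr_fun hr_zero _))
end

section
/- Let u be an ultrafilter on ℕ and let A and B be semigroups. Suppose there are multiplication-preserving maps rA : Filter.Germ (↑u) A → A and rB : Filter.Germ (↑u) B → B with rA (↑a) = a for all a : A and rB (↑b) = b for all b : B. Then there exists a multiplication-preserving map r : Filter.Germ (↑u) (A × B) → A × B with r (↑p) = p for all p : A × B. That is, if A is a retract of its ultrapower and B is a retract of its ultrapower, then A × B is a retract of its ultrapower. -/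
section GermRetract

open Filter

variable {ι A B : Type*} {l : Filter ι} [Mul A] [Mul B]

/-- The multiplicative map between germs induced by composition with a multiplicative map:
the functorial action of the enlargement `A ↦ Germ l A`. -/
def germMulHom (l : Filter ι) (f : A →ₙ* B) : Germ l A →ₙ* Germ l B where
  toFun := Germ.map f
  map_mul' x y := Germ.inductionOn₂ x y fun g h =>
    congrArg Germ.ofFun (funext fun i => map_mul f (g i) (h i))

@[simp]
theorem germMulHom_const (f : A →ₙ* B) (a : A) :
    germMulHom l f (a : Germ l A) = (f a : Germ l B) :=
  Germ.map_const l a f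

/-- `A` is a retract of its reduced power `Germ l A`: some multiplicative map `Germ l A → A` is a
left inverse of the constant-germ embedding. When `l` is an ultrafilter, `Germ l A` is the
ultrapower of `A`. -/
def IsGermRetract (l : Filter ι) (A : Type*) [Mul A] : Prop :=
  ∃ r : Germ l A →ₙ* A, ∀ a : A, r ↑a = a

theorem stmt_9_general (hA : IsGermRetract l A) (hB : IsGermRetract l B) :
    IsGermRetract l (A × B) := by
  obtain ⟨rA, rA_const⟩ := hA
  obtain ⟨rB, rB_const⟩ := hB
  let r : Germ l (A × B) →ₙ* A × B :=
    (rA.comp (germMulHom l (MulHom.fst A B))).prod (rB.comp (germMulHom l (MulHom.snd A B)))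
  exact ⟨r, fun p => by simp [r, rA_const, rB_const]⟩

end GermRetract

/-- If the semigroups `A` and `B` are retracts of their ultrapowers over an ultrafilter `u`
on ℕ, then so is the direct product `A × B`. -/
theorem stmt_9 (u : Ultrafilter ℕ) (A B : Type*) [Semigroup A] [Semigroup B]
    (rA : Filter.Germ (↑u : Filter ℕ) A → A) (rB : Filter.Germ (↑u : Filter ℕ) B → B)
    (hA : ∀ x y, rA (x * y) = rA x * rA y) (hA' : ∀ a : A, rA ↑a = a)
    (hB : ∀ x y, rB (x * y) = rB x * rB y) (hB' : ∀ b : B, rB ↑b = b) :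
    ∃ r : Filter.Germ (↑u : Filter ℕ) (A × B) → A × B,
      (∀ x y, r (x * y) = r x * r y) ∧ (∀ p : A × B, r ↑p = p) := by
  obtain ⟨r, r_const⟩ := stmt_9_general ⟨⟨rA, hA⟩, hA'⟩ ⟨⟨rB, hB⟩, hB'⟩
  exact ⟨r, map_mul r, r_const⟩
end
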